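/- arXiv:2111.06147 — 4 statements merged into one kernel-verified Lean document; each statement's English description precedes it below -/
import Mathlib

section
/- Let Ψ : [0,∞) → ℝ be convex with Ψ(0) ≤ 0, let c > 0 and 0 < x₀ ≤ x₁, and suppose Ψ(x₁) > 0. Then ∫_{x₁}^∞ (1/x) · exp( - ∫_{x₀}^x (2Ψ(y))/(c y) dy ) dx < ∞. -/
open MeasureTheory Set

/-!
Convexity and `Ψ 0 ≤ 0` make `Ψ y / y` monotone on `(0, ∞)`, so the rate `2 Ψ y / (c y)` stays above
its value `k > 0` at `x₁` for all `y ≥ x₁`. The exponent therefore decreases at least linearly with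
slope `k`, and the integrand is dominated by a multiple of `exp (-k x)`.
-/

theorem monotoneOn_div_self_of_convexOn {𝕜 : Type*} [Field 𝕜] [LinearOrder 𝕜]
    [IsStrictOrderedRing 𝕜] {s : Set 𝕜} {f : 𝕜 → 𝕜} (hf : ConvexOn 𝕜 s f) (hs : 0 ∈ s)
    (hf₀ : f 0 ≤ 0) : MonotoneOn (fun x => f x / x) (s ∩ Ioi 0) := by
  rintro x ⟨hxs, hx : 0 < x⟩ y ⟨hys, hy : 0 < y⟩ hxy
  have secant_le : (f x - f 0) / x ≤ (f y - f 0) / y := by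
    simpa only [sub_zero] using hf.secant_mono hs hxs hys hx.ne' hy.ne' hxy
  have value_zero_le : f 0 / x ≤ f 0 / y := by
    simpa only [neg_div, neg_le_neg_iff] using
      div_le_div_of_nonneg_left (neg_nonneg.2 hf₀) hx hxy
  calc f x / x = (f x - f 0) / x + f 0 / x := by ring
    _ ≤ (f y - f 0) / y + f 0 / y := add_le_add secant_le value_zero_le
    _ = f y / y := by ring

theorem mul_sub_le_integral_sub_integral {f : ℝ → ℝ} {a x y k : ℝ} (hxy : x ≤ y)
    (hfx : IntervalIntegrable f volume a x) (hfy : IntervalIntegrable f volume a y)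
    (hk : ∀ t ∈ Icc x y, k ≤ f t) :
    k * (y - x) ≤ (∫ t in a..y, f t) - ∫ t in a..x, f t := by
  calc k * (y - x) = ∫ _ in x..y, k := by
        rw [intervalIntegral.integral_const, smul_eq_mul, mul_comm]
    _ ≤ ∫ t in x..y, f t :=
        intervalIntegral.integral_mono_on hxy intervalIntegrable_const (hfx.symm.trans hfy) hk
    _ = (∫ t in a..y, f t) - ∫ t in a..x, f t :=
        (intervalIntegral.integral_interval_sub_left hfy hfx).symm

theorem integrableOn_exp_neg_of_mul_sub_le_sub {F : ℝ → ℝ} {b k : ℝ} (hk : 0 < k)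
    (hF : ∀ x ∈ Ici b, ∀ y, x ≤ y → k * (y - x) ≤ F y - F x) :
    IntegrableOn (fun x => Real.exp (-F x)) (Ioi b) := by
  have antitone_exp : AntitoneOn (fun x => Real.exp (-F x)) (Ioi b) := fun x hx y _ hxy =>
    Real.exp_le_exp.2 <| neg_le_neg <| sub_nonneg.1 <|
      (mul_nonneg hk.le (sub_nonneg.2 hxy)).trans (hF x (Ioi_subset_Ici_self hx) y hxy)
  refine ((exp_neg_integrableOn_Ioi b hk).const_mul (Real.exp (k * b - F b))).mono'
    (aemeasurable_restrict_of_antitoneOn measurableSet_Ioi antitone_exp).aestronglyMeasurable ?_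
  filter_upwards [ae_restrict_mem measurableSet_Ioi] with x hx
  rw [Real.norm_of_nonneg (Real.exp_nonneg _), ← Real.exp_add, Real.exp_le_exp]
  linarith [hF b self_mem_Ici x (mem_Ioi.1 hx).le]

theorem integrableOn_exp_neg_integral {f : ℝ → ℝ} {a b k : ℝ} (hk : 0 < k)
    (hf : ∀ x ∈ Ici b, IntervalIntegrable f volume a x) (hkf : ∀ x ∈ Ici b, k ≤ f x) :
    IntegrableOn (fun x => Real.exp (-∫ t in a..x, f t)) (Ioi b) :=
  integrableOn_exp_neg_of_mul_sub_le_sub hk fun x hx y hxy =>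
    mul_sub_le_integral_sub_integral hxy (hf x hx) (hf y (le_trans hx hxy))
      fun t ht => hkf t (le_trans hx ht.1)

theorem integrableOn_one_div_mul_Ioi {μ : Measure ℝ} {g : ℝ → ℝ} {b : ℝ} (hb : 0 < b)
    (hg : IntegrableOn g (Ioi b) μ) : IntegrableOn (fun x => 1 / x * g x) (Ioi b) μ := by
  refine hg.bdd_mul (c := 1 / b) (by fun_prop) ?_
  filter_upwards [ae_restrict_mem measurableSet_Ioi] with x hx
  rw [Real.norm_of_nonneg (one_div_nonneg.2 (hb.trans hx).le)]
  exact one_div_le_one_div_of_le hb (mem_Ioi.1 hx).le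

theorem stmt_3_general {Ψ : ℝ → ℝ} (hmono : MonotoneOn (fun y => Ψ y / y) (Ioi 0))
    {c x₀ x₁ : ℝ} (hc : 0 < c) (hx₀ : 0 < x₀) (hx₁ : 0 < x₁) (hΨx₁ : 0 < Ψ x₁) :
    IntegrableOn (fun x => 1 / x * Real.exp (-(∫ y in x₀..x, 2 * Ψ y / (c * y)))) (Ioi x₁) := by
  have rate_mono : MonotoneOn (fun y => 2 * Ψ y / (c * y)) (Ioi 0) := by
    simpa only [mul_div_mul_comm, Function.comp_def] using
      (monotone_mul_left_of_nonneg (div_pos two_pos hc).le).comp_monotoneOn hmono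
  have rate_integrable (x : ℝ) (hx : x ∈ Ici x₁) :
      IntervalIntegrable (fun y => 2 * Ψ y / (c * y)) volume x₀ x :=
    (rate_mono.mono fun _ hy => (lt_min hx₀ (hx₁.trans_le hx)).trans_le hy.1).intervalIntegrable
  have rate_pos : 0 < 2 * Ψ x₁ / (c * x₁) := by positivity
  exact integrableOn_one_div_mul_Ioi hx₁ <| integrableOn_exp_neg_integral rate_pos rate_integrable
    fun x hx => rate_mono hx₁ (hx₁.trans_le hx) hx

/-- If `Ψ` is convex and continuous on `[0,∞)` with `Ψ(0) ≤ 0`, `c > 0`,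
`0 < x₀ ≤ x₁` and `Ψ(x₁) > 0`, then
`∫_{x₁}^∞ (1/x) exp(-∫_{x₀}^x 2Ψ(y)/(cy) dy) dx < ∞`. -/
theorem stmt_3 (Ψ : ℝ → ℝ) (hconv : ConvexOn ℝ (Set.Ici (0 : ℝ)) Ψ)
    (hcont : ContinuousOn Ψ (Set.Ici (0 : ℝ))) (h0 : Ψ 0 ≤ 0)
    (c x₀ x₁ : ℝ) (hc : 0 < c) (hx₀ : 0 < x₀) (hx₀₁ : x₀ ≤ x₁) (hΨx₁ : 0 < Ψ x₁) :
    IntegrableOn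
      (fun x => 1 / x * Real.exp (-(∫ y in x₀..x, 2 * Ψ y / (c * y))))
      (Set.Ioi x₁) :=
  stmt_3_general ((monotoneOn_div_self_of_convexOn hconv self_mem_Ici h0).mono
    fun _ hy => ⟨Ioi_subset_Ici_self hy, hy⟩) hc hx₀ (hx₀.trans_le hx₀₁) hΨx₁
end

section
/- Let ρ ∈ [0,∞) and let Ψ be continuous and strictly positive on (ρ,∞). Assume T(y) := ∫_y^∞ du/Ψ(u) < ∞ for every y > ρ (Grey's condition) and lim_{y→ρ⁺} T(y) = ∞. Then for all z > 0 and θ > 0: ∫_ρ^∞ θ e^{-yz - θ T(y)} dy/Ψ(y) = ∫_ρ^∞ z e^{-yz - θ T(y)} dy, and both integrals are finite. -/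
open MeasureTheory Set Filter

/-! With `v y = exp (-θ T y)` one has `v' = θ v / Ψ`, so the identity is the rule
`∫_ρ^∞ e^{-yz} v'(y) dy = z ∫_ρ^∞ e^{-yz} v(y) dy - e^{-ρz} v(ρ⁺)` for the Laplace transform of a
derivative, whose boundary term vanishes because `T` blows up at `ρ`. The function `v` increases
from `0` to `1`, so it is bounded and `v'` is integrable; this makes both integrals finite. -/

open scoped Topology

section HalfLine

lemma continuousWithinAt_update_Ici {α β : Type*} [LinearOrder α] [TopologicalSpace α]
    [TopologicalSpace β] {f : α → β} {a : α} {b : β} (hf : Tendsto f (𝓝[>] a) (𝓝 b)) :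
    ContinuousWithinAt (Function.update f a b) (Ici a) a := by
  rwa [continuousWithinAt_update_same, Ici_sdiff_left]

lemma hasDerivAt_update_of_ne {𝕜 F : Type*} [NontriviallyNormedField 𝕜] [DecidableEq 𝕜]
    [NormedAddCommGroup F] [NormedSpace 𝕜 F] {f : 𝕜 → F} {f' : F} {a x : 𝕜}
    (hf : HasDerivAt f f' x) (hx : x ≠ a) (k : F) : HasDerivAt (Function.update f a k) f' x :=
  hf.congr_of_eventuallyEq <|
    (Function.update_eventuallyEq f a k).filter_mono (le_principal_iff.2 (isOpen_ne.mem_nhds hx))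

lemma tendsto_update_atTop {α β : Type*} [Preorder α] [NoTopOrder α] [DecidableEq α] {f : α → β}
    {l : Filter β} (hf : Tendsto f atTop l) (a : α) (b : β) :
    Tendsto (Function.update f a b) atTop l :=
  hf.congr' ((Function.update_eventuallyEq_cofinite f a b).filter_mono atTop_le_cofinite).symm

variable {E : Type*} [NormedAddCommGroup E] [NormedSpace ℝ E]

lemma integral_Ioi_of_hasDerivAt_of_tendsto_nhdsGT [CompleteSpace E] {f f' : ℝ → E} {a : ℝ}
    {k l : E} (hderiv : ∀ x ∈ Ioi a, HasDerivAt f (f' x) x) (hf' : IntegrableOn f' (Ioi a))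
    (ha : Tendsto f (𝓝[>] a) (𝓝 k)) (hl : Tendsto f atTop (𝓝 l)) :
    ∫ x in Ioi a, f' x = l - k := by
  simpa only [Function.update_self] using
    integral_Ioi_of_hasDerivAt_of_tendsto (continuousWithinAt_update_Ici ha)
      (fun x hx => hasDerivAt_update_of_ne (hderiv x hx) (ne_of_gt hx) k) hf'
      (tendsto_update_atTop hl a k)

lemma integrableOn_Ioi_deriv_of_nonneg_of_tendsto_nhdsGT {g g' : ℝ → ℝ} {a k l : ℝ}
    (hderiv : ∀ x ∈ Ioi a, HasDerivAt g (g' x) x) (hnonneg : ∀ x ∈ Ioi a, 0 ≤ g' x)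
    (ha : Tendsto g (𝓝[>] a) (𝓝 k)) (hl : Tendsto g atTop (𝓝 l)) :
    IntegrableOn g' (Ioi a) :=
  integrableOn_Ioi_deriv_of_nonneg (continuousWithinAt_update_Ici ha)
    (fun x hx => hasDerivAt_update_of_ne (hderiv x hx) (ne_of_gt hx) k) hnonneg
    (tendsto_update_atTop hl a k)

lemma hasDerivAt_integral_Ioi [CompleteSpace E] {f : ℝ → E} {c x : ℝ}
    (hf : IntegrableOn f (Ioi c)) (hcx : c < x) (hmeas : StronglyMeasurableAtFilter f (𝓝 x))
    (hcont : ContinuousAt f x) : HasDerivAt (fun y => ∫ u in Ioi y, f u) (-f x) x := by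
  have hsplit : (fun y => ∫ u in Ioi y, f u) =ᶠ[𝓝 x]
      fun y => (∫ u in Ioi c, f u) - ∫ u in c..y, f u := by
    filter_upwards [Ioi_mem_nhds hcx] with y hy
    rw [← intervalIntegral.integral_Ioi_sub_Ioi hf (le_of_lt hy), sub_sub_cancel]
  have hint : IntervalIntegrable f volume c x :=
    (intervalIntegrable_iff_integrableOn_Ioc_of_le hcx.le).2 (hf.mono_set Ioc_subset_Ioi_self)
  have hprimitive := intervalIntegral.integral_hasDerivAt_right hint hmeas hcont
  exact (hprimitive.const_sub _).congr_of_eventuallyEq hsplit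

lemma hasDerivAt_integral_Ioi_of_continuousOn [CompleteSpace E] {f : ℝ → E} {a x : ℝ}
    (hf : ContinuousOn f (Ioi a)) (hint : ∀ y ∈ Ioi a, IntegrableOn f (Ioi y)) (hx : x ∈ Ioi a) :
    HasDerivAt (fun y => ∫ u in Ioi y, f u) (-f x) x := by
  obtain ⟨c, hac, hcx⟩ := exists_between (mem_Ioi.1 hx)
  exact hasDerivAt_integral_Ioi (hint c hac) hcx (hf.stronglyMeasurableAtFilter isOpen_Ioi x hx)
    (hf.continuousAt (Ioi_mem_nhds hx))

end HalfLine

section Laplace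

variable {E : Type*} [NormedAddCommGroup E] [NormedSpace ℝ E] {v v' : ℝ → E} {a z : ℝ}

lemma integrableOn_Ioi_exp_neg_mul_smul (hv : IntegrableOn v (Ioi a)) (hz : 0 ≤ z) :
    IntegrableOn (fun y => Real.exp (-y * z) • v y) (Ioi a) := by
  refine hv.bdd_smul (Real.exp (-a * z)) (Continuous.aestronglyMeasurable (by fun_prop)) ?_
  refine ae_restrict_of_forall_mem measurableSet_Ioi fun y (hy : a < y) => ?_
  rw [Real.norm_of_nonneg (Real.exp_pos _).le]
  gcongr

lemma integrableOn_Ioi_exp_neg_mul_smul_of_bounded {C : ℝ}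
    (hv : AEStronglyMeasurable v (volume.restrict (Ioi a)))
    (hbound : ∀ᵐ y ∂volume.restrict (Ioi a), ‖v y‖ ≤ C) (hz : 0 < z) :
    IntegrableOn (fun y => Real.exp (-y * z) • v y) (Ioi a) := by
  have hexp : IntegrableOn (fun y => Real.exp (-y * z)) (Ioi a) := by
    simpa only [neg_mul, mul_comm z] using exp_neg_integrableOn_Ioi a hz
  exact hexp.smul_bdd C hv hbound

theorem integral_Ioi_exp_neg_mul_smul_deriv [CompleteSpace E] {k : E}
    (hderiv : ∀ y ∈ Ioi a, HasDerivAt v (v' y) y) (ha : Tendsto v (𝓝[>] a) (𝓝 k))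
    (hv : IntegrableOn (fun y => Real.exp (-y * z) • v y) (Ioi a))
    (hv' : IntegrableOn (fun y => Real.exp (-y * z) • v' y) (Ioi a)) :
    ∫ y in Ioi a, Real.exp (-y * z) • v' y =
      z • (∫ y in Ioi a, Real.exp (-y * z) • v y) - Real.exp (-a * z) • k := by
  have hprod : ∀ y ∈ Ioi a, HasDerivAt (fun y => Real.exp (-y * z) • v y)
      (Real.exp (-y * z) • v' y - z • Real.exp (-y * z) • v y) y := by
    intro y hy
    have hexp : HasDerivAt (fun y => Real.exp (-y * z)) (Real.exp (-y * z) * (-1 * z)) y :=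
      ((hasDerivAt_id y).neg.mul_const z).exp
    exact (hexp.smul (hderiv y hy)).congr_deriv (by module)
  have hzv : IntegrableOn (fun y => z • Real.exp (-y * z) • v y) (Ioi a) := hv.smul z
  have hleft : Tendsto (fun y => Real.exp (-y * z) • v y) (𝓝[>] a)
      (𝓝 (Real.exp (-a * z) • k)) := by
    have hexp : Continuous fun y => Real.exp (-y * z) := by fun_prop
    exact hexp.continuousWithinAt.tendsto.smul ha
  have htop : Tendsto (fun y => Real.exp (-y * z) • v y) atTop (𝓝 0) :=
    tendsto_zero_of_hasDerivAt_of_integrableOn_Ioi hprod (hv'.sub hzv) hv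
  have hftc := integral_Ioi_of_hasDerivAt_of_tendsto_nhdsGT hprod (hv'.sub hzv) hleft htop
  rw [integral_sub hv' hzv, integral_smul, zero_sub] at hftc
  rw [sub_eq_iff_eq_add'.1 hftc, sub_eq_add_neg]

end Laplace

section ExpNeg

variable {S s : ℝ → ℝ} {a : ℝ}

lemma hasDerivAt_exp_neg_of_hasDerivAt_neg {x : ℝ} (hS : HasDerivAt S (-s x) x) :
    HasDerivAt (fun y => Real.exp (-S y)) (Real.exp (-S x) * s x) x := by
  simpa only [neg_neg] using hS.fun_neg.exp

lemma integrableOn_Ioi_exp_neg_mul_of_hasDerivAt_neg {L : ℝ}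
    (hS : ∀ x ∈ Ioi a, HasDerivAt S (-s x) x) (hs : ∀ x ∈ Ioi a, 0 ≤ s x)
    (ha : Tendsto S (𝓝[>] a) atTop) (hL : Tendsto S atTop (𝓝 L)) :
    IntegrableOn (fun x => Real.exp (-S x) * s x) (Ioi a) :=
  integrableOn_Ioi_deriv_of_nonneg_of_tendsto_nhdsGT
    (fun x hx => hasDerivAt_exp_neg_of_hasDerivAt_neg (hS x hx))
    (fun x hx => mul_nonneg (Real.exp_pos _).le (hs x hx))
    (Real.tendsto_exp_neg_atTop_nhds_zero.comp ha) hL.neg.rexp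

lemma le_of_hasDerivAt_neg_of_tendsto {L : ℝ} (hS : ∀ x ∈ Ioi a, HasDerivAt S (-s x) x)
    (hs : ∀ x ∈ Ioi a, 0 ≤ s x) (hL : Tendsto S atTop (𝓝 L)) {x : ℝ} (hx : x ∈ Ioi a) :
    L ≤ S x := by
  have hanti : AntitoneOn S (Ioi a) := by
    refine antitoneOn_of_hasDerivWithinAt_nonpos (f' := fun x => -s x) (convex_Ioi a)
      (fun y hy => (hS y hy).continuousAt.continuousWithinAt) ?_ ?_ <;>
      rw [interior_Ioi]
    · exact fun y hy => (hS y hy).hasDerivWithinAt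
    · exact fun y hy => neg_nonpos.2 (hs y hy)
  exact le_of_tendsto hL ((eventually_ge_atTop x).mono fun y hxy =>
    hanti hx (lt_of_lt_of_le hx hxy) hxy)

lemma integrableOn_Ioi_exp_neg_mul_exp_neg {z L : ℝ}
    (hS : ∀ x ∈ Ioi a, HasDerivAt S (-s x) x) (hs : ∀ x ∈ Ioi a, 0 ≤ s x)
    (hL : Tendsto S atTop (𝓝 L)) (hz : 0 < z) :
    IntegrableOn (fun y => Real.exp (-y * z) * Real.exp (-S y)) (Ioi a) := by
  have hcont : ContinuousOn (fun y => Real.exp (-S y)) (Ioi a) := fun y hy =>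
    (hasDerivAt_exp_neg_of_hasDerivAt_neg (hS y hy)).continuousAt.continuousWithinAt
  have hbound : ∀ y ∈ Ioi a, ‖Real.exp (-S y)‖ ≤ Real.exp (-L) := by
    intro y hy
    rw [Real.norm_of_nonneg (Real.exp_pos _).le]
    gcongr
    exact le_of_hasDerivAt_neg_of_tendsto hS hs hL hy
  exact integrableOn_Ioi_exp_neg_mul_smul_of_bounded
    (hcont.aestronglyMeasurable measurableSet_Ioi)
    (ae_restrict_of_forall_mem measurableSet_Ioi hbound) hz

theorem integral_Ioi_exp_neg_mul_exp_neg_mul_deriv {z : ℝ}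
    (hS : ∀ x ∈ Ioi a, HasDerivAt S (-s x) x) (ha : Tendsto S (𝓝[>] a) atTop)
    (hint : IntegrableOn (fun y => Real.exp (-y * z) * Real.exp (-S y)) (Ioi a))
    (hint' : IntegrableOn (fun y => Real.exp (-y * z) * (Real.exp (-S y) * s y)) (Ioi a)) :
    ∫ y in Ioi a, Real.exp (-y * z) * (Real.exp (-S y) * s y) =
      z * ∫ y in Ioi a, Real.exp (-y * z) * Real.exp (-S y) := by
  simpa only [smul_eq_mul, mul_zero, sub_zero] using integral_Ioi_exp_neg_mul_smul_deriv
    (fun y hy => hasDerivAt_exp_neg_of_hasDerivAt_neg (hS y hy))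
    (Real.tendsto_exp_neg_atTop_nhds_zero.comp ha) hint hint'

end ExpNeg

theorem stmt_11_general (ρ : ℝ) (Ψ : ℝ → ℝ) (hcont : ContinuousOn Ψ (Ioi ρ))
    (hpos : ∀ u ∈ Ioi ρ, 0 < Ψ u)
    (hint : ∀ y ∈ Ioi ρ, IntegrableOn (fun u => (Ψ u)⁻¹) (Ioi y))
    (T : ℝ → ℝ) (hT : ∀ y ∈ Ioi ρ, T y = ∫ u in Ioi y, (Ψ u)⁻¹)
    (hTlim : Tendsto T (𝓝[>] ρ) atTop) (z θ : ℝ) (hz : 0 < z) (hθ : 0 < θ) :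
    IntegrableOn (fun y => θ * Real.exp (-y * z - θ * T y) / Ψ y) (Ioi ρ)
    ∧ IntegrableOn (fun y => z * Real.exp (-y * z - θ * T y)) (Ioi ρ)
    ∧ ∫ y in Ioi ρ, θ * Real.exp (-y * z - θ * T y) / Ψ y
      = ∫ y in Ioi ρ, z * Real.exp (-y * z - θ * T y) := by
  have hTderiv : ∀ x ∈ Ioi ρ, HasDerivAt T (-(Ψ x)⁻¹) x := by
    intro x hx
    have hinv : ContinuousOn (fun u => (Ψ u)⁻¹) (Ioi ρ) :=
      hcont.inv₀ fun u hu => (hpos u hu).ne'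
    exact (hasDerivAt_integral_Ioi_of_continuousOn hinv hint hx).congr_of_eventuallyEq
      ((eventually_gt_nhds hx).mono hT)
  have hTtop : Tendsto T atTop (𝓝 0) :=
    (tendsto_integral_Ioi_zero tendsto_id).congr'
      ((eventually_gt_atTop ρ).mono fun y hy => (hT y hy).symm)
  have hS : ∀ x ∈ Ioi ρ, HasDerivAt (fun y => θ * T y) (-(θ * (Ψ x)⁻¹)) x := fun x hx =>
    ((hTderiv x hx).const_mul θ).congr_deriv (mul_neg _ _)
  have hs : ∀ x ∈ Ioi ρ, 0 ≤ θ * (Ψ x)⁻¹ := fun x hx =>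
    mul_nonneg hθ.le (inv_pos.2 (hpos x hx)).le
  have hSlim : Tendsto (fun y => θ * T y) (𝓝[>] ρ) atTop := hTlim.const_mul_atTop hθ
  have hStop : Tendsto (fun y => θ * T y) atTop (𝓝 (θ * 0)) := hTtop.const_mul θ
  have hright := integrableOn_Ioi_exp_neg_mul_exp_neg hS hs hStop hz
  have hleft := integrableOn_Ioi_exp_neg_mul_smul
    (integrableOn_Ioi_exp_neg_mul_of_hasDerivAt_neg hS hs hSlim hStop) hz.le
  have hexp : ∀ y, Real.exp (-y * z - θ * T y) = Real.exp (-y * z) * Real.exp (-(θ * T y)) :=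
    fun y => by rw [sub_eq_add_neg, Real.exp_add]
  have hdensity : ∀ y, θ * Real.exp (-y * z - θ * T y) / Ψ y =
      Real.exp (-y * z) * (Real.exp (-(θ * T y)) * (θ * (Ψ y)⁻¹)) := fun y => by
    rw [hexp]
    ring
  simp only [hdensity]
  simp only [hexp, integral_const_mul]
  exact ⟨hleft, hright.const_mul z,
    integral_Ioi_exp_neg_mul_exp_neg_mul_deriv hS hSlim hright hleft⟩

/-- Integration by parts for the Laplace transform of the extinction time of a
CSBP: if `Ψ` is continuous and strictly positive on `(ρ,∞)`, `T(y) = ∫_y^∞ du/Ψ(u)`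
is finite for every `y > ρ` (Grey's condition) and `T(y) → ∞` as `y → ρ⁺`, then
for all `z, θ > 0` the integrals `∫_ρ^∞ θ e^{-yz - θT(y)} dy/Ψ(y)` and
`∫_ρ^∞ z e^{-yz - θT(y)} dy` are finite and equal. -/
theorem stmt_11 (ρ : ℝ) (hρ : 0 ≤ ρ) (Ψ : ℝ → ℝ)
    (hcont : ContinuousOn Ψ (Set.Ioi ρ))
    (hpos : ∀ u ∈ Set.Ioi ρ, 0 < Ψ u)
    (hint : ∀ y ∈ Set.Ioi ρ, IntegrableOn (fun u => (Ψ u)⁻¹) (Set.Ioi y))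
    (T : ℝ → ℝ)
    (hT : ∀ y ∈ Set.Ioi ρ, T y = ∫ u in Set.Ioi y, (Ψ u)⁻¹)
    (hTlim : Filter.Tendsto T (nhdsWithin ρ (Set.Ioi ρ)) Filter.atTop)
    (z θ : ℝ) (hz : 0 < z) (hθ : 0 < θ) :
    IntegrableOn (fun y => θ * Real.exp (-y * z - θ * T y) / Ψ y) (Set.Ioi ρ)
    ∧ IntegrableOn (fun y => z * Real.exp (-y * z - θ * T y)) (Set.Ioi ρ)
    ∧ ∫ y in Set.Ioi ρ, θ * Real.exp (-y * z - θ * T y) / Ψ y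
      = ∫ y in Set.Ioi ρ, z * Real.exp (-y * z - θ * T y) := by
  exact stmt_11_general ρ Ψ hcont hpos hint T hT hTlim z θ hz hθ
end

section
/- Let ρ ∈ (0,∞] and let Ψ be continuous and strictly negative on (0,ρ). Assume D(y) := ∫_0^y du/(-Ψ(u)) < ∞ for every y ∈ (0,ρ) (Dynkin's condition) and lim_{y→ρ⁻} D(y) = ∞. Then for all z > 0 and θ > 0: ∫_0^ρ θ (1 - e^{-yz}) e^{-θ D(y)} dy/(-Ψ(y)) = ∫_0^ρ z e^{-yz - θ D(y)} dy, and both integrals are finite. -/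
open MeasureTheory Set Filter

/-!
`θ e^{-θ D(y)} / (-Ψ(y))` is the density of the law on `(0, ρ)` with hazard rate `θ / (-Ψ)`, whose
survival function is `e^{-θ D}`; divergence of `D` at `ρ` says that no mass is lost. For a random
variable `Y` with this law the identity reads `E[F(Y)] = ∫ F'(t) P(Y > t) dt` with
`F(y) = 1 - e^{-yz}`, which is the layer cake formula.
-/

theorem absolutelyContinuousOnInterval_comp_of_lipschitzOnWith {X Y : Type*}
    [PseudoMetricSpace X] [PseudoMetricSpace Y] {f : ℝ → X} {φ : X → Y} {a b : ℝ} {K : NNReal}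
    {s : Set X} (hφ : LipschitzOnWith K φ s) (hf : AbsolutelyContinuousOnInterval f a b)
    (hs : MapsTo f (uIcc a b) s) :
    AbsolutelyContinuousOnInterval (fun x => φ (f x)) a b := by
  rw [absolutelyContinuousOnInterval_iff] at hf ⊢
  intro ε hε
  obtain ⟨δ, hδ, hfδ⟩ := hf (ε / (K + 1)) (by positivity)
  refine ⟨δ, hδ, fun E hE hlen => ?_⟩
  have hmem : ∀ i ∈ Finset.range E.1, (E.2 i).1 ∈ uIcc a b ∧ (E.2 i).2 ∈ uIcc a b := hE.1
  calc ∑ i ∈ Finset.range E.1, dist (φ (f (E.2 i).1)) (φ (f (E.2 i).2))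
      ≤ ∑ i ∈ Finset.range E.1, K * dist (f (E.2 i).1) (f (E.2 i).2) :=
        Finset.sum_le_sum fun i hi =>
          hφ.dist_le_mul _ (hs (hmem i hi).1) _ (hs (hmem i hi).2)
    _ = K * ∑ i ∈ Finset.range E.1, dist (f (E.2 i).1) (f (E.2 i).2) :=
        (Finset.mul_sum ..).symm
    _ ≤ K * (ε / (K + 1)) := by gcongr; exact (hfδ E hE hlen).le
    _ < ε := by
        rw [mul_div_assoc', div_lt_iff₀ (by positivity)]
        linarith

theorem absolutelyContinuousOnInterval_comp_of_contDiff {E F : Type*} [NormedAddCommGroup E]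
    [NormedSpace ℝ E] [ProperSpace E] [NormedAddCommGroup F] [NormedSpace ℝ F] {f : ℝ → E}
    {φ : E → F} {a b : ℝ} (hφ : ContDiff ℝ 1 φ) (hf : AbsolutelyContinuousOnInterval f a b) :
    AbsolutelyContinuousOnInterval (fun x => φ (f x)) a b := by
  obtain ⟨C, hC⟩ := hf.exists_bound
  obtain ⟨K, hK⟩ := hφ.contDiffOn.exists_lipschitzOnWith one_ne_zero
    (convex_closedBall 0 C) (isCompact_closedBall 0 C)
  exact absolutelyContinuousOnInterval_comp_of_lipschitzOnWith hK hf fun x hx =>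
    mem_closedBall_zero_iff.mpr (hC x hx)

theorem integral_deriv_comp_mul_deriv_of_absolutelyContinuousOnInterval {f φ : ℝ → ℝ} {a b : ℝ}
    (hφ : ContDiff ℝ 1 φ) (hf : AbsolutelyContinuousOnInterval f a b) :
    ∫ x in a..b, deriv φ (f x) * deriv f x = φ (f b) - φ (f a) := by
  rw [← (absolutelyContinuousOnInterval_comp_of_contDiff hφ hf).integral_deriv_eq_sub]
  refine intervalIntegral.integral_congr_ae ?_
  filter_upwards [hf.ae_differentiableAt] with x hx hxab
  exact (deriv_comp x (hφ.differentiable one_ne_zero _) (hx (uIoc_subset_uIcc hxab))).symm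

/-- The real points of the interval `(0, ρ)`, whose right end may be `∞`. -/
def positivesBelow (ρ : EReal) : Set ℝ := {y | 0 < y ∧ (y : EReal) < ρ}

/-- The survival function `P(Y > t) = exp (-∫₀ᵗ h)` of a positive random variable `Y` with hazard
rate `h`. -/
noncomputable def survival (h : ℝ → ℝ) (t : ℝ) : ℝ := Real.exp (-∫ u in (0 : ℝ)..t, h u)

/-- `h` is the hazard rate of a probability law on `(0, ρ)`: the cumulative hazard `∫₀ᵗ h` is finite
for `t < ρ` and unbounded. -/
structure IsHazardRate (h : ℝ → ℝ) (ρ : EReal) : Prop where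
  nonneg : ∀ y ∈ positivesBelow ρ, 0 ≤ h y
  intervalIntegrable : ∀ y ∈ positivesBelow ρ, IntervalIntegrable h volume 0 y
  exists_le_integral : ∀ M : ℝ, ∃ y ∈ positivesBelow ρ, M ≤ ∫ u in (0 : ℝ)..y, h u

/-- The law on `(0, ρ)` with hazard rate `h`, given by its density `h · survival h`. -/
noncomputable def hazardLaw (h : ℝ → ℝ) (ρ : EReal) : Measure ℝ :=
  (volume.restrict (positivesBelow ρ)).withDensity fun y => ENNReal.ofReal (h y * survival h y)

section PositivesBelow

variable {ρ : EReal}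

theorem Ioc_subset_positivesBelow {b : ℝ} (hb : b ∈ positivesBelow ρ) :
    Ioc 0 b ⊆ positivesBelow ρ :=
  fun _ hy => ⟨hy.1, (EReal.coe_le_coe_iff.mpr hy.2).trans_lt hb.2⟩

theorem measurableSet_positivesBelow : MeasurableSet (positivesBelow ρ) :=
  measurableSet_Ioi.inter (measurable_coe_real_ereal measurableSet_Iio)

theorem aecover_Ioc_positivesBelow {ι : Type*} {l : Filter ι} {b : ι → ℝ}
    (hb : ∀ y ∈ positivesBelow ρ, ∀ᶠ i in l, y ≤ b i) :
    AECover (volume.restrict (positivesBelow ρ)) l fun i => Ioc 0 (b i) :=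
  aecover_restrict_of_ae_imp measurableSet_positivesBelow
    (ae_of_all _ fun y hy => (hb y hy).mono fun _ hle => ⟨hy.1, hle⟩) fun _ => measurableSet_Ioc

end PositivesBelow

theorem survival_pos (h : ℝ → ℝ) (t : ℝ) : 0 < survival h t := Real.exp_pos _

theorem survival_zero (h : ℝ → ℝ) : survival h 0 = 1 := by
  simp only [survival, intervalIntegral.integral_same, neg_zero, Real.exp_zero]

theorem survival_const_mul (θ : ℝ) (h : ℝ → ℝ) (t : ℝ) :
    survival (fun y => θ * h y) t = Real.exp (-θ * ∫ u in (0 : ℝ)..t, h u) := by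
  rw [survival, intervalIntegral.integral_const_mul, neg_mul]

theorem continuousOn_survival {h : ℝ → ℝ} {b : ℝ} (hh : IntervalIntegrable h volume 0 b) :
    ContinuousOn (survival h) (uIcc 0 b) :=
  (intervalIntegral.continuousOn_primitive_interval' hh left_mem_uIcc).neg.rexp

theorem intervalIntegrable_mul_survival {h : ℝ → ℝ} {b : ℝ}
    (hh : IntervalIntegrable h volume 0 b) :
    IntervalIntegrable (fun y => h y * survival h y) volume 0 b :=
  hh.mul_continuousOn (continuousOn_survival hh)

theorem integral_mul_survival {h : ℝ → ℝ} {t b : ℝ} (hh : IntervalIntegrable h volume 0 b)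
    (ht : t ∈ uIcc 0 b) :
    ∫ y in t..b, h y * survival h y = survival h t - survival h b := by
  have hsub : uIcc t b ⊆ uIcc 0 b := uIcc_subset_uIcc ht right_mem_uIcc
  have hexp : deriv (fun x : ℝ => -Real.exp (-x)) = fun x => Real.exp (-x) := by
    funext x
    simpa using ((hasDerivAt_neg x).exp.neg).deriv
  have hchain := integral_deriv_comp_mul_deriv_of_absolutelyContinuousOnInterval
    (φ := fun x => -Real.exp (-x)) (by fun_prop)
    ((hh.absolutelyContinuousOnInterval_intervalIntegral left_mem_uIcc).mono hsub)
  simp only [hexp] at hchain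
  calc ∫ y in t..b, h y * survival h y
      = ∫ y in t..b, Real.exp (-∫ u in (0 : ℝ)..y, h u) * deriv (∫ u in (0 : ℝ)..·, h u) y := by
        refine intervalIntegral.integral_congr_ae ?_
        filter_upwards [hh.ae_hasDerivAt_integral] with y hy hyt
        rw [(hy (hsub (uIoc_subset_uIcc hyt)) 0 left_mem_uIcc).deriv, mul_comm, survival]
    _ = survival h t - survival h b := by rw [hchain, survival, survival]; ring

theorem ae_mem_positivesBelow_hazardLaw (h : ℝ → ℝ) (ρ : EReal) :
    ∀ᵐ y ∂hazardLaw h ρ, y ∈ positivesBelow ρ :=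
  (withDensity_absolutelyContinuous _ _).ae_le (ae_restrict_mem measurableSet_positivesBelow)

theorem hazardLaw_Ioi_of_le (h : ℝ → ℝ) {ρ : EReal} {t : ℝ} (ht : ρ ≤ t) :
    hazardLaw h ρ (Ioi t) = 0 := by
  refine measure_eq_zero_iff_ae_notMem.mpr ?_
  filter_upwards [ae_mem_positivesBelow_hazardLaw h ρ] with y hy hty
  exact (hy.2.trans_le ht).not_ge (EReal.coe_le_coe_iff.mpr hty.le)

namespace IsHazardRate

variable {h : ℝ → ℝ} {ρ : EReal}

theorem const_mul (hh : IsHazardRate h ρ) {θ : ℝ} (hθ : 0 < θ) :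
    IsHazardRate (fun y => θ * h y) ρ where
  nonneg y hy := mul_nonneg hθ.le (hh.nonneg y hy)
  intervalIntegrable y hy := (hh.intervalIntegrable y hy).const_mul θ
  exists_le_integral M := by
    obtain ⟨y, hy, hM⟩ := hh.exists_le_integral (M / θ)
    refine ⟨y, hy, ?_⟩
    rw [intervalIntegral.integral_const_mul]
    exact (div_le_iff₀' hθ).mp hM

theorem integral_mono (hh : IsHazardRate h ρ) {x y : ℝ} (hx : 0 ≤ x) (hxy : x ≤ y)
    (hy : y ∈ positivesBelow ρ) : ∫ u in (0 : ℝ)..x, h u ≤ ∫ u in (0 : ℝ)..y, h u := by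
  refine intervalIntegral.integral_mono_interval le_rfl hx hxy ?_ (hh.intervalIntegrable y hy)
  filter_upwards [ae_restrict_mem measurableSet_Ioc] with u hu
  exact hh.nonneg u (Ioc_subset_positivesBelow hy hu)

theorem antitoneOn_survival (hh : IsHazardRate h ρ) :
    AntitoneOn (survival h) (positivesBelow ρ) := fun _ hx _ hy hxy =>
  Real.exp_le_exp.mpr (neg_le_neg (hh.integral_mono hx.1.le hxy hy))

theorem exists_seq_tendsto_survival (hh : IsHazardRate h ρ) :
    ∃ b : ℕ → ℝ, (∀ n, b n ∈ positivesBelow ρ) ∧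
      Tendsto (fun n => survival h (b n)) atTop (nhds 0) ∧
      ∀ y ∈ positivesBelow ρ, ∀ᶠ n in atTop, y ≤ b n := by
  choose b hb hle using fun n : ℕ => hh.exists_le_integral n
  have hlim : Tendsto (fun n => ∫ u in (0 : ℝ)..b n, h u) atTop atTop :=
    tendsto_atTop_mono hle tendsto_natCast_atTop_atTop
  refine ⟨b, hb, Real.tendsto_exp_atBot.comp (tendsto_neg_atTop_atBot.comp hlim), fun y hy => ?_⟩
  filter_upwards [hlim.eventually_gt_atTop (∫ u in (0 : ℝ)..y, h u)] with n hn
  by_contra! hlt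
  exact hn.not_ge (hh.integral_mono (hb n).1.le hlt.le hy)

theorem aemeasurable_density (hh : IsHazardRate h ρ) :
    AEMeasurable (fun y => h y * survival h y) (volume.restrict (positivesBelow ρ)) := by
  obtain ⟨b, hb, -, hle⟩ := hh.exists_seq_tendsto_survival
  refine (aecover_Ioc_positivesBelow hle).aemeasurable fun n => ?_
  rw [Measure.restrict_restrict_of_subset (Ioc_subset_positivesBelow (hb n))]
  exact (intervalIntegrable_mul_survival (hh.intervalIntegrable _ (hb n))).1.aemeasurable

theorem hazardLaw_Ioc (hh : IsHazardRate h ρ) {t b : ℝ} (ht : 0 ≤ t) (htb : t ≤ b)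
    (hb : b ∈ positivesBelow ρ) :
    hazardLaw h ρ (Ioc t b) = ENNReal.ofReal (survival h t - survival h b) := by
  have hsub : Ioc t b ⊆ positivesBelow ρ :=
    (Ioc_subset_Ioc_left ht).trans (Ioc_subset_positivesBelow hb)
  have hmem : t ∈ uIcc 0 b := uIcc_of_le hb.1.le ▸ ⟨ht, htb⟩
  have hint : IntegrableOn (fun y => h y * survival h y) (Ioc t b) :=
    (intervalIntegrable_mul_survival (hh.intervalIntegrable b hb)).1.mono_set
      (Ioc_subset_Ioc_left ht)
  rw [hazardLaw, withDensity_apply _ measurableSet_Ioc, Measure.restrict_restrict_of_subset hsub,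
    ← integral_mul_survival (hh.intervalIntegrable b hb) hmem, intervalIntegral.integral_of_le htb,
    ofReal_integral_eq_lintegral_ofReal hint]
  filter_upwards [ae_restrict_mem measurableSet_Ioc] with y hy
  exact mul_nonneg (hh.nonneg y (hsub hy)) (survival_pos h y).le

theorem hazardLaw_Ioi (hh : IsHazardRate h ρ) {t : ℝ} (ht : 0 ≤ t) (htρ : (t : EReal) < ρ) :
    hazardLaw h ρ (Ioi t) = ENNReal.ofReal (survival h t) := by
  obtain ⟨b, hb, hlim, hle⟩ := hh.exists_seq_tendsto_survival
  have htb : ∀ᶠ n in atTop, t ≤ b n := by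
    rcases ht.eq_or_lt with rfl | ht
    · exact Eventually.of_forall fun n => (hb n).1.le
    · exact hle t ⟨ht, htρ⟩
  have hmass : Tendsto (fun n => hazardLaw h ρ (Ioc t (b n))) atTop
      (nhds (hazardLaw h ρ (Ioi t))) := by
    have hcover : AECover ((hazardLaw h ρ).restrict (Ioi t)) atTop fun n => Ioc 0 (b n) :=
      ((aecover_Ioc_positivesBelow hle).mono_ac (withDensity_absolutelyContinuous _ _)).restrict
    have := hcover.lintegral_tendsto_of_countably_generated (f := fun _ => 1) aemeasurable_const
    simpa only [setLIntegral_one, lintegral_one, Measure.restrict_apply measurableSet_Ioc,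
      Measure.restrict_apply MeasurableSet.univ, univ_inter, Ioc_inter_Ioi, max_eq_right ht]
      using this
  have hsurv : Tendsto (fun n => ENNReal.ofReal (survival h t - survival h (b n))) atTop
      (nhds (ENNReal.ofReal (survival h t))) := by
    simpa only [sub_zero] using ENNReal.tendsto_ofReal (hlim.const_sub (survival h t))
  refine tendsto_nhds_unique hmass (hsurv.congr' ?_)
  filter_upwards [htb] with n hn
  exact (hh.hazardLaw_Ioc ht hn (hb n)).symm

theorem isProbabilityMeasure_hazardLaw (hh : IsHazardRate h ρ) :
    IsProbabilityMeasure (hazardLaw h ρ) := by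
  obtain ⟨b, hb, -⟩ := hh.exists_le_integral 0
  have hpos : Ioi 0 =ᵐ[hazardLaw h ρ] univ :=
    eventuallyEq_univ.mpr ((ae_mem_positivesBelow_hazardLaw h ρ).mono fun _ hy => hy.1)
  have hρ : ((0 : ℝ) : EReal) < ρ := (EReal.coe_lt_coe_iff.mpr hb.1).trans hb.2
  exact ⟨by rw [← measure_congr hpos, hh.hazardLaw_Ioi le_rfl hρ, survival_zero,
    ENNReal.ofReal_one]⟩

theorem integrable_hazardLaw_iff (hh : IsHazardRate h ρ) {F : ℝ → ℝ} :
    Integrable F (hazardLaw h ρ) ↔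
      IntegrableOn (fun y => h y * survival h y * F y) (positivesBelow ρ) := by
  rw [hazardLaw, integrable_withDensity_iff_integrable_smul₀' hh.aemeasurable_density.ennreal_ofReal
    (ae_of_all _ fun _ => ENNReal.ofReal_lt_top)]
  refine integrable_congr ?_
  filter_upwards [ae_restrict_mem measurableSet_positivesBelow] with y hy
  rw [ENNReal.toReal_ofReal (mul_nonneg (hh.nonneg y hy) (survival_pos h y).le), smul_eq_mul]

theorem integral_hazardLaw (hh : IsHazardRate h ρ) (F : ℝ → ℝ) :
    ∫ y, F y ∂hazardLaw h ρ = ∫ y in positivesBelow ρ, h y * survival h y * F y := by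
  rw [hazardLaw, integral_withDensity_eq_integral_toReal_smul₀
    hh.aemeasurable_density.ennreal_ofReal (ae_of_all _ fun _ => ENNReal.ofReal_lt_top)]
  refine setIntegral_congr_fun measurableSet_positivesBelow fun y hy => ?_
  simp only [ENNReal.toReal_ofReal (mul_nonneg (hh.nonneg y hy) (survival_pos h y).le), smul_eq_mul]

section LayerCake

variable {f : ℝ → ℝ}

theorem lintegral_primitive_hazardLaw (hh : IsHazardRate h ρ)
    (hf : ∀ t > 0, IntervalIntegrable f volume 0 t) (hf₀ : ∀ t > 0, 0 ≤ f t) :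
    ∫⁻ y, ENNReal.ofReal (∫ t in (0 : ℝ)..y, f t) ∂hazardLaw h ρ =
      ∫⁻ t in positivesBelow ρ, ENNReal.ofReal (survival h t * f t) := by
  have hpos : 0 ≤ᵐ[hazardLaw h ρ] id := by
    filter_upwards [ae_mem_positivesBelow_hazardLaw h ρ] with y hy using hy.1.le
  calc ∫⁻ y, ENNReal.ofReal (∫ t in (0 : ℝ)..y, f t) ∂hazardLaw h ρ
      = ∫⁻ t in Ioi 0, hazardLaw h ρ (Ioi t) * ENNReal.ofReal (f t) :=
        lintegral_comp_eq_lintegral_meas_lt_mul _ hpos aemeasurable_id hf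
          (ae_restrict_of_forall_mem measurableSet_Ioi hf₀)
    _ = ∫⁻ t in positivesBelow ρ, hazardLaw h ρ (Ioi t) * ENNReal.ofReal (f t) := by
        have hsupport : (fun t => hazardLaw h ρ (Ioi t) * ENNReal.ofReal (f t)).support ⊆
            Real.toEReal ⁻¹' Iio ρ := Function.support_subset_iff'.mpr fun t ht => by
          rw [hazardLaw_Ioi_of_le h (not_lt.mp ht), zero_mul]
        rw [← setLIntegral_eq_of_support_subset hsupport,
          Measure.restrict_restrict (measurable_coe_real_ereal measurableSet_Iio), inter_comm]
        rfl
    _ = ∫⁻ t in positivesBelow ρ, ENNReal.ofReal (survival h t * f t) :=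
        setLIntegral_congr_fun measurableSet_positivesBelow fun t ht => by
          simp only [hh.hazardLaw_Ioi ht.1.le ht.2, ENNReal.ofReal_mul (survival_pos h t).le]

theorem integrableOn_and_integral_primitive_hazardLaw (hh : IsHazardRate h ρ)
    (hf : ∀ t > 0, IntervalIntegrable f volume 0 t) (hf₀ : ∀ t > 0, 0 ≤ f t)
    (hF : Integrable (fun y => ∫ t in (0 : ℝ)..y, f t) (hazardLaw h ρ)) :
    IntegrableOn (fun t => survival h t * f t) (positivesBelow ρ) ∧
      ∫ y, (∫ t in (0 : ℝ)..y, f t) ∂hazardLaw h ρ =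
        ∫ t in positivesBelow ρ, survival h t * f t := by
  have hF₀ : 0 ≤ᵐ[hazardLaw h ρ] fun y => ∫ t in (0 : ℝ)..y, f t := by
    filter_upwards [ae_mem_positivesBelow_hazardLaw h ρ] with y hy
    rw [Pi.zero_apply, intervalIntegral.integral_of_le hy.1.le]
    exact setIntegral_nonneg measurableSet_Ioc fun t ht => hf₀ t ht.1
  have hfS₀ : 0 ≤ᵐ[volume.restrict (positivesBelow ρ)] fun t => survival h t * f t :=
    ae_restrict_of_forall_mem measurableSet_positivesBelow fun t ht =>
      mul_nonneg (survival_pos h t).le (hf₀ t ht.1)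
  have hmeas : AEStronglyMeasurable (fun t => survival h t * f t)
      (volume.restrict (positivesBelow ρ)) := by
    have hfm : AEMeasurable f (volume.restrict (Ioi 0)) :=
      aemeasurable_Ioi_of_forall_Ioc fun t ht => (hf t ht).1.aemeasurable
    exact ((aemeasurable_restrict_of_antitoneOn measurableSet_positivesBelow
      hh.antitoneOn_survival).mul (hfm.mono_set fun t ht => ht.1)).aestronglyMeasurable
  have hlayer := hh.lintegral_primitive_hazardLaw hf hf₀
  refine ⟨⟨hmeas, ?_⟩, ?_⟩
  · rw [hasFiniteIntegral_iff_ofReal hfS₀, ← hlayer, ← hasFiniteIntegral_iff_ofReal hF₀]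
    exact hF.2
  · rw [integral_eq_lintegral_of_nonneg_ae hF₀ hF.1, integral_eq_lintegral_of_nonneg_ae hfS₀ hmeas,
      hlayer]

end LayerCake

end IsHazardRate

theorem integral_mul_exp_neg_mul (z y : ℝ) :
    ∫ t in (0 : ℝ)..y, z * Real.exp (-t * z) = 1 - Real.exp (-y * z) := by
  have hderiv : ∀ t ∈ uIcc 0 y,
      HasDerivAt (fun t => 1 - Real.exp (-t * z)) (z * Real.exp (-t * z)) t := fun t _ =>
    (((hasDerivAt_neg t).mul_const z).exp.const_sub 1).congr_deriv (by ring)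
  rw [intervalIntegral.integral_eq_sub_of_hasDerivAt hderiv
    (Continuous.intervalIntegrable (by fun_prop) _ _)]
  simp only [neg_zero, zero_mul, Real.exp_zero, sub_self, sub_zero]

theorem IsHazardRate.integrableOn_and_integral_one_sub_exp {h : ℝ → ℝ} {ρ : EReal}
    (hh : IsHazardRate h ρ) {z : ℝ} (hz : 0 ≤ z) :
    IntegrableOn (fun y => h y * survival h y * (1 - Real.exp (-y * z))) (positivesBelow ρ) ∧
      IntegrableOn (fun y => survival h y * (z * Real.exp (-y * z))) (positivesBelow ρ) ∧
      ∫ y in positivesBelow ρ, h y * survival h y * (1 - Real.exp (-y * z)) =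
        ∫ y in positivesBelow ρ, survival h y * (z * Real.exp (-y * z)) := by
  have hF : Integrable (fun y => 1 - Real.exp (-y * z)) (hazardLaw h ρ) := by
    have := hh.isProbabilityMeasure_hazardLaw
    refine Integrable.of_bound (by fun_prop) 1 ?_
    filter_upwards [ae_mem_positivesBelow_hazardLaw h ρ] with y hy
    have hexp : Real.exp (-y * z) ≤ 1 := Real.exp_le_one_iff.mpr (by nlinarith [hy.1])
    rw [Real.norm_of_nonneg (sub_nonneg.mpr hexp)]
    linarith [Real.exp_pos (-y * z)]
  have hlayer := hh.integrableOn_and_integral_primitive_hazardLaw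
    (f := fun t => z * Real.exp (-t * z))
    (fun t _ => Continuous.intervalIntegrable (by fun_prop) _ _) (fun t _ => by positivity)
    (by simpa only [integral_mul_exp_neg_mul] using hF)
  simp only [integral_mul_exp_neg_mul, hh.integral_hazardLaw] at hlayer
  exact ⟨hh.integrable_hazardLaw_iff.mp hF, hlayer⟩

theorem stmt_12_general (ρ : EReal) (Ψ : ℝ → ℝ)
    (hneg : ∀ y : ℝ, 0 < y → (y : EReal) < ρ → Ψ y < 0)
    (hint : ∀ y : ℝ, 0 < y → (y : EReal) < ρ →
      IntegrableOn (fun u => (-Ψ u)⁻¹) (Set.Ioo 0 y))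
    (D : ℝ → ℝ)
    (hD : ∀ y : ℝ, 0 < y → (y : EReal) < ρ →
      D y = ∫ u in Set.Ioo (0 : ℝ) y, (-Ψ u)⁻¹)
    (hDlim : ∀ M : ℝ, ∃ y : ℝ, 0 < y ∧ (y : EReal) < ρ ∧ M ≤ D y)
    (z θ : ℝ) (hz : 0 < z) (hθ : 0 < θ) :
    IntegrableOn
      (fun y => θ * (1 - Real.exp (-y * z)) * Real.exp (-θ * D y) / (-Ψ y))
      {y : ℝ | 0 < y ∧ (y : EReal) < ρ}
    ∧ IntegrableOn (fun y => z * Real.exp (-y * z - θ * D y))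
        {y : ℝ | 0 < y ∧ (y : EReal) < ρ}
    ∧ ∫ y in {y : ℝ | 0 < y ∧ (y : EReal) < ρ},
          θ * (1 - Real.exp (-y * z)) * Real.exp (-θ * D y) / (-Ψ y)
      = ∫ y in {y : ℝ | 0 < y ∧ (y : EReal) < ρ},
          z * Real.exp (-y * z - θ * D y) := by
  have hDinterval : ∀ y ∈ positivesBelow ρ, D y = ∫ u in (0 : ℝ)..y, (-Ψ u)⁻¹ := fun y hy => by
    rw [hD y hy.1 hy.2, intervalIntegral.integral_of_le hy.1.le, integral_Ioc_eq_integral_Ioo]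
  have hhazard : IsHazardRate (fun y => (-Ψ y)⁻¹) ρ :=
    { nonneg := fun y hy => inv_nonneg.mpr (neg_nonneg.mpr (hneg y hy.1 hy.2).le)
      intervalIntegrable := fun y hy =>
        (intervalIntegrable_iff_integrableOn_Ioo_of_le hy.1.le).mpr (hint y hy.1 hy.2)
      exists_le_integral := fun M =>
        let ⟨y, hy₀, hyρ, hM⟩ := hDlim M
        ⟨y, ⟨hy₀, hyρ⟩, hM.trans_eq (hDinterval y ⟨hy₀, hyρ⟩)⟩ }
  have hparts := (hhazard.const_mul hθ).integrableOn_and_integral_one_sub_exp hz.le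
  simp only [survival_const_mul] at hparts
  have hleft : EqOn
      (fun y => θ * (-Ψ y)⁻¹ * Real.exp (-θ * ∫ u in (0 : ℝ)..y, (-Ψ u)⁻¹) *
        (1 - Real.exp (-y * z)))
      (fun y => θ * (1 - Real.exp (-y * z)) * Real.exp (-θ * D y) / (-Ψ y))
      (positivesBelow ρ) := fun y hy => by
    simp only [← hDinterval y hy, div_eq_mul_inv]
    ring
  have hright : EqOn
      (fun y => Real.exp (-θ * ∫ u in (0 : ℝ)..y, (-Ψ u)⁻¹) * (z * Real.exp (-y * z)))
      (fun y => z * Real.exp (-y * z - θ * D y)) (positivesBelow ρ) := fun y hy => by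
    simp only [← hDinterval y hy, sub_eq_add_neg, Real.exp_add, neg_mul]
    ring
  rwa [integrableOn_congr_fun hleft measurableSet_positivesBelow,
    integrableOn_congr_fun hright measurableSet_positivesBelow,
    setIntegral_congr_fun measurableSet_positivesBelow hleft,
    setIntegral_congr_fun measurableSet_positivesBelow hright] at hparts

/-- Integration by parts for the Laplace transform of the explosion time of a
CSBP: if `Ψ` is continuous and strictly negative on `(0,ρ)` (`ρ ∈ (0,∞]`),
`D(y) = ∫_0^y du/(-Ψ(u))` is finite for every `y ∈ (0,ρ)` (Dynkin's condition)
and `D(y) → ∞` as `y → ρ⁻`, then for all `z, θ > 0` the integrals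
`∫_0^ρ θ (1-e^{-yz}) e^{-θD(y)} dy/(-Ψ(y))` and `∫_0^ρ z e^{-yz - θD(y)} dy`
are finite and equal. -/
theorem stmt_12 (ρ : EReal) (hρ : 0 < ρ) (Ψ : ℝ → ℝ)
    (hcont : ContinuousOn Ψ {y : ℝ | 0 < y ∧ (y : EReal) < ρ})
    (hneg : ∀ y : ℝ, 0 < y → (y : EReal) < ρ → Ψ y < 0)
    (hint : ∀ y : ℝ, 0 < y → (y : EReal) < ρ →
      IntegrableOn (fun u => (-Ψ u)⁻¹) (Set.Ioo 0 y))
    (D : ℝ → ℝ)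
    (hD : ∀ y : ℝ, 0 < y → (y : EReal) < ρ →
      D y = ∫ u in Set.Ioo (0 : ℝ) y, (-Ψ u)⁻¹)
    (hDlim : ∀ M : ℝ, ∃ y : ℝ, 0 < y ∧ (y : EReal) < ρ ∧ M ≤ D y)
    (z θ : ℝ) (hz : 0 < z) (hθ : 0 < θ) :
    IntegrableOn
      (fun y => θ * (1 - Real.exp (-y * z)) * Real.exp (-θ * D y) / (-Ψ y))
      {y : ℝ | 0 < y ∧ (y : EReal) < ρ}
    ∧ IntegrableOn (fun y => z * Real.exp (-y * z - θ * D y))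
        {y : ℝ | 0 < y ∧ (y : EReal) < ρ}
    ∧ ∫ y in {y : ℝ | 0 < y ∧ (y : EReal) < ρ},
          θ * (1 - Real.exp (-y * z)) * Real.exp (-θ * D y) / (-Ψ y)
      = ∫ y in {y : ℝ | 0 < y ∧ (y : EReal) < ρ},
          z * Real.exp (-y * z - θ * D y) :=
  stmt_12_general ρ Ψ hneg hint D hD hDlim z θ hz hθ
end

section
/- Let σ² : (0,∞) → (0,∞) be continuously differentiable and μ : (0,∞) → ℝ continuous, and fix x₀ > 0. Define the scale density s_U(x) := exp( - ∫_{x₀}^x (2μ(u))/(σ²(u)) du ), the dual drift μ^V(y) := (1/2)(σ²)'(y) - μ(y), and the dual scale density s_V(v) := exp( - ∫_{x₀}^v (2μ^V(u))/(σ²(u)) du ). Then for every v > 0: s_V(v) = σ²(x₀) / ( σ²(v) s_U(v) ). Consequently, with the speed densities m_U(x) := 1/(σ²(x) s_U(x)) and m_V(x) := 1/(σ²(x) s_V(x)), one has m_V(x) = s_U(x)/σ²(x₀) and m_U(x) = s_V(x)/σ²(x₀) for all x > 0. -/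
open Set

open MeasureTheory

/-!
The integrands of the two scale densities add up to the logarithmic derivative
`2 μ / σ² + 2 μ^V / σ² = (σ²)' / σ²`, so
`s_U(v) s_V(v) = exp (-∫_{x₀}^v (log σ²)') = σ²(x₀) / σ²(v)`.
All three identities are rearrangements of this symmetric product formula.
-/

/-- The scale density, normalized to be `1` at `x₀`, of the diffusion with generator
`(1/2) a f'' + b f'`. The diffusion coefficient enters through its square `a = σ²`. -/
noncomputable def scaleDensity (a b : ℝ → ℝ) (x₀ x : ℝ) : ℝ :=
  Real.exp (-∫ u in x₀..x, 2 * b u / a u)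

/-- The speed density, relative to `scaleDensity a b x₀`, of the diffusion with generator
`(1/2) a f'' + b f'`. -/
noncomputable def speedDensity (a b : ℝ → ℝ) (x₀ x : ℝ) : ℝ :=
  1 / (a x * scaleDensity a b x₀ x)

/-- The drift of the Siegmund dual of the diffusion with generator `(1/2) a f'' + b f'`;
the dual has the same squared diffusion coefficient `a`. -/
noncomputable def siegmundDualDrift (a b : ℝ → ℝ) (x : ℝ) : ℝ :=
  1 / 2 * deriv a x - b x

theorem scaleDensity_pos (a b : ℝ → ℝ) (x₀ x : ℝ) : 0 < scaleDensity a b x₀ x :=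
  Real.exp_pos _

theorem two_mul_siegmundDualDrift_div (a b : ℝ → ℝ) (x : ℝ) :
    2 * siegmundDualDrift a b x / a x = logDeriv a x - 2 * b x / a x := by
  rw [siegmundDualDrift, logDeriv_apply]
  ring

section Interval

variable {a b : ℝ → ℝ} {x₀ v : ℝ}

theorem intervalIntegrable_logDeriv (ha : ContinuousOn a (uIcc x₀ v))
    (hne : ∀ x ∈ uIcc x₀ v, a x ≠ 0) (ha' : IntervalIntegrable (deriv a) volume x₀ v) :
    IntervalIntegrable (logDeriv a) volume x₀ v :=
  ha'.mul_continuousOn (ha.inv₀ hne)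

theorem integral_logDeriv_eq_log_sub_log (ha : ∀ x ∈ uIcc x₀ v, DifferentiableAt ℝ a x)
    (hne : ∀ x ∈ uIcc x₀ v, a x ≠ 0) (ha' : IntervalIntegrable (logDeriv a) volume x₀ v) :
    ∫ u in x₀..v, logDeriv a u = Real.log (a v) - Real.log (a x₀) :=
  intervalIntegral.integral_eq_sub_of_hasDerivAt
    (fun x hx => (ha x hx).hasDerivAt.log (hne x hx)) ha'

theorem scaleDensity_mul_scaleDensity_siegmundDualDrift
    (ha : ∀ x ∈ uIcc x₀ v, DifferentiableAt ℝ a x) (hpos : ∀ x ∈ uIcc x₀ v, 0 < a x)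
    (ha' : IntervalIntegrable (deriv a) volume x₀ v) (hb : IntervalIntegrable b volume x₀ v) :
    scaleDensity a b x₀ v * scaleDensity a (siegmundDualDrift a b) x₀ v = a x₀ / a v := by
  have hcont : ContinuousOn a (uIcc x₀ v) := fun x hx => (ha x hx).continuousAt.continuousWithinAt
  have hne : ∀ x ∈ uIcc x₀ v, a x ≠ 0 := fun x hx => (hpos x hx).ne'
  have hlog := intervalIntegrable_logDeriv hcont hne ha'
  have hdrift : IntervalIntegrable (fun u => 2 * b u / a u) volume x₀ v :=
    (hb.const_mul 2).mul_continuousOn (hcont.inv₀ hne)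
  have hdual : ∫ u in x₀..v, 2 * siegmundDualDrift a b u / a u =
      Real.log (a v) - Real.log (a x₀) - ∫ u in x₀..v, 2 * b u / a u := by
    simp only [two_mul_siegmundDualDrift_div]
    rw [intervalIntegral.integral_sub hlog hdrift, integral_logDeriv_eq_log_sub_log ha hne hlog]
  calc scaleDensity a b x₀ v * scaleDensity a (siegmundDualDrift a b) x₀ v
      = Real.exp (Real.log (a x₀) - Real.log (a v)) := by
        rw [scaleDensity, scaleDensity, ← Real.exp_add, hdual]
        ring_nf
    _ = a x₀ / a v := by
        rw [Real.exp_sub, Real.exp_log (hpos x₀ left_mem_uIcc),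
          Real.exp_log (hpos v right_mem_uIcc)]

end Interval

theorem stmt_15_general {a b : ℝ → ℝ} {I : Set ℝ} (hI : IsOpen I) (hconn : I.OrdConnected)
    (hpos : ∀ x ∈ I, 0 < a x) (ha : DifferentiableOn ℝ a I)
    (ha' : LocallyIntegrableOn (deriv a) I) (hb : LocallyIntegrableOn b I)
    {x₀ v : ℝ} (hx₀ : x₀ ∈ I) (hv : v ∈ I) :
    scaleDensity a (siegmundDualDrift a b) x₀ v = a x₀ / (a v * scaleDensity a b x₀ v)
      ∧ speedDensity a (siegmundDualDrift a b) x₀ v = scaleDensity a b x₀ v / a x₀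
      ∧ speedDensity a b x₀ v = scaleDensity a (siegmundDualDrift a b) x₀ v / a x₀ := by
  have hsub : uIcc x₀ v ⊆ I := hconn.uIcc_subset hx₀ hv
  have hprod := scaleDensity_mul_scaleDensity_siegmundDualDrift
    (fun x hx => ha.differentiableAt (hI.mem_nhds (hsub hx))) (fun x hx => hpos x (hsub hx))
    (ha'.integrableOn_compact_subset hsub isCompact_uIcc).intervalIntegrable
    (hb.integrableOn_compact_subset hsub isCompact_uIcc).intervalIntegrable
  have hav := (hpos v hv).ne'
  have hax₀ := (hpos x₀ hx₀).ne'
  have hU := (scaleDensity_pos a b x₀ v).ne'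
  have hV := (scaleDensity_pos a (siegmundDualDrift a b) x₀ v).ne'
  rw [eq_div_iff hav] at hprod
  unfold speedDensity
  refine ⟨?_, ?_, ?_⟩
  · rw [eq_div_iff (mul_ne_zero hav hU)]
    linarith
  · rw [div_eq_div_iff (mul_ne_zero hav hV) hax₀]
    linarith
  · rw [div_eq_div_iff (mul_ne_zero hav hU) hax₀]
    linarith

/-- Siegmund duality exchanges scale and speed densities: with
`s_U(x) = exp(-∫_{x₀}^x 2μ/σ²)`, dual drift `μ^V = (1/2)(σ²)' - μ`,
`s_V(v) = exp(-∫_{x₀}^v 2μ^V/σ²)`, `m_U = 1/(σ² s_U)` and `m_V = 1/(σ² s_V)`,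
one has `s_V(v) = σ²(x₀)/(σ²(v) s_U(v))`, `m_V(v) = s_U(v)/σ²(x₀)` and
`m_U(v) = s_V(v)/σ²(x₀)` for every `v > 0`. -/
theorem stmt_15 (sq μ : ℝ → ℝ)
    (hsqpos : ∀ x : ℝ, 0 < x → 0 < sq x)
    (hsqC1 : ContDiffOn ℝ 1 sq (Set.Ioi (0 : ℝ)))
    (hμ : ContinuousOn μ (Set.Ioi (0 : ℝ)))
    (x₀ : ℝ) (hx₀ : 0 < x₀)
    (sU sV mU mV : ℝ → ℝ)
    (hsU : ∀ x : ℝ, sU x = Real.exp (-(∫ u in x₀..x, 2 * μ u / sq u)))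
    (hsV : ∀ v : ℝ, sV v =
      Real.exp (-(∫ u in x₀..v, 2 * (1 / 2 * deriv sq u - μ u) / sq u)))
    (hmU : ∀ x : ℝ, mU x = 1 / (sq x * sU x))
    (hmV : ∀ x : ℝ, mV x = 1 / (sq x * sV x)) :
    ∀ v : ℝ, 0 < v →
      sV v = sq x₀ / (sq v * sU v)
      ∧ mV v = sU v / sq x₀
      ∧ mU v = sV v / sq x₀ := by
  intro v hv
  rw [hmV, hmU, hsV, hsU]
  exact stmt_15_general isOpen_Ioi ordConnected_Ioi hsqpos (hsqC1.differentiableOn one_ne_zero)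
    ((hsqC1.continuousOn_deriv_of_isOpen isOpen_Ioi le_rfl).locallyIntegrableOn measurableSet_Ioi)
    (hμ.locallyIntegrableOn measurableSet_Ioi) hx₀ hv
end
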